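/- Let (X, σ_X) be a one-sided subshift over a finite alphabet and let Φ = (log φ_n)_{n=1}^∞ ∈ C_sa(X, σ_X) be generated by a sub-multiplicative function φ : L(X) → [0,∞). Then sup{ Φ_*(μ) + h_μ(σ_X) : μ ∈ M(X, σ_X) } = lim_{n→∞} (1/n) log u_n, where u_n = Σ_{I ∈ L_n(X)} φ(I). -/

import Mathlib

open MeasureTheory Filter Topology
open scoped Classical ENNReal NNReal

noncomputable section

/-- The left shift on one-sided sequences. -/
def shiftMap {A : Type} : (ℕ → A) → (ℕ → A) := fun x n => x (n + 1)

/-- The cylinder set of a finite word. -/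
def cyl {A : Type} (I : List A) : Set (ℕ → A) :=
  {x | ∀ i : Fin I.length, x i = I.get i}

/-- Membership of a word in the language of `X`. -/
def Lang {A : Type} (X : Set (ℕ → A)) (I : List A) : Prop :=
  (cyl I ∩ X).Nonempty

/-- `X` is a (nonempty) one-sided subshift. -/
def IsSubshift {A : Type} [TopologicalSpace A] (X : Set (ℕ → A)) : Prop :=
  X.Nonempty ∧ IsCompact X ∧ shiftMap '' X ⊆ X

/-- weak `p`-specification -/
def WeakSpecification {A : Type} (X : Set (ℕ → A)) (p : ℕ) : Prop :=
  ∀ I J : List A, Lang X I → Lang X J →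
    ∃ K : List A, K.length ≤ p ∧ Lang X (I ++ K ++ J)

/-- `p`-specification -/
def Specification {A : Type} (X : Set (ℕ → A)) (p : ℕ) : Prop :=
  ∀ I J : List A, Lang X I → Lang X J →
    ∃ K : List A, K.length = p ∧ Lang X (I ++ K ++ J)

/-- invariant probability measures supported on `X` (predicate on plain measures) -/
def InvOn {A : Type} [MeasurableSpace A] (X : Set (ℕ → A)) (μ : Measure (ℕ → A)) : Prop :=
  IsProbabilityMeasure μ ∧ μ.map shiftMap = μ ∧ μ X = 1

/-- the set of shift-invariant probability measures on `X` -/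
def MInv {A : Type} [MeasurableSpace A] (X : Set (ℕ → A)) :
    Set (ProbabilityMeasure (ℕ → A)) :=
  {μ | (μ : Measure (ℕ → A)).map shiftMap = (μ : Measure (ℕ → A)) ∧
    (μ : Measure (ℕ → A)) X = 1}

/-- measure of a word: `μ([I] ∩ X)` -/
def mw {A : Type} [MeasurableSpace A] (X : Set (ℕ → A)) (μ : Measure (ℕ → A))
    (I : List A) : ℝ :=
  (μ (cyl I ∩ X)).toReal

/-- the initial word of length `n` of a sequence -/
def wordOf {A : Type} (x : ℕ → A) (n : ℕ) : List A := List.ofFn (fun i : Fin n => x i)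

/-- `n`-block entropy -/
def Hblock {A : Type} [Fintype A] [MeasurableSpace A] (X : Set (ℕ → A))
    (μ : Measure (ℕ → A)) (n : ℕ) : ℝ :=
  -∑ w : Fin n → A, mw X μ (List.ofFn w) * Real.log (mw X μ (List.ofFn w))

/-- measure-theoretic entropy (the limit exists for invariant measures; `liminf` realizes it) -/
def ent {A : Type} [Fintype A] [MeasurableSpace A] (X : Set (ℕ → A))
    (μ : Measure (ℕ → A)) : ℝ :=
  liminf (fun n : ℕ => Hblock X μ n / n) atTop

/-- extended logarithm: `log t`, with value `⊥` for `t ≤ 0` -/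
def elog (t : ℝ) : EReal := if t ≤ 0 then ⊥ else ((Real.log t : ℝ) : EReal)

/-- the integral `∫ log g dμ`, valued in `ℝ ∪ {−∞}` -/
def intlog {Ω : Type*} [MeasurableSpace Ω] (μ : Measure Ω) (g : Ω → ℝ) : EReal :=
  ((∫⁻ x, ENNReal.ofReal (Real.log (g x)) ∂μ : ℝ≥0∞) : EReal) -
    ((∫⁻ x, (if g x ≤ 0 then (⊤ : ℝ≥0∞) else ENNReal.ofReal (-Real.log (g x))) ∂μ : ℝ≥0∞) : EReal)

/-- sub-additive potential `Φ = (log φ_n)_{n ≥ 1}` -/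
def SubaddPot {A : Type} [TopologicalSpace A] (X : Set (ℕ → A))
    (φ : ℕ → (ℕ → A) → ℝ) : Prop :=
  (∀ n, 1 ≤ n → ContinuousOn (φ n) X) ∧
  (∀ n, 1 ≤ n → ∀ x ∈ X, 0 ≤ φ n x) ∧
  ∃ c > (0:ℝ), ∀ n m : ℕ, 1 ≤ n → 1 ≤ m → ∀ x ∈ X,
    φ (n + m) x ≤ c * φ n x * φ m (shiftMap^[n] x)

/-- `Φ_*(μ) = lim (1/n) ∫ log φ_n dμ` (realized as a `liminf` in `EReal`) -/
def PhiStar {A : Type} [MeasurableSpace A] (μ : Measure (ℕ → A))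
    (φ : ℕ → (ℕ → A) → ℝ) : EReal :=
  liminf (fun n : ℕ => (((n : ℝ)⁻¹ : ℝ) : EReal) * intlog μ (φ n)) atTop

/-- sub-multiplicative function on the language of `X` -/
def Submult {A : Type} (X : Set (ℕ → A)) (φ : List A → ℝ) : Prop :=
  (∀ I, Lang X I → 0 ≤ φ I) ∧ φ [] = 1 ∧
  ∃ c > (0:ℝ), ∀ I J : List A, Lang X (I ++ J) → φ (I ++ J) ≤ c⁻¹ * φ I * φ J

/-- the potential generated by a word function -/
def genPot {A : Type} (φ : List A → ℝ) : ℕ → (ℕ → A) → ℝ := fun n x => φ (wordOf x n)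

/-- the scaled potential `cΦ = (log φ_n^c)` -/
def scPot {Ω : Type*} (c : ℝ) (φ : ℕ → Ω → ℝ) : ℕ → Ω → ℝ := fun n x => φ n x ^ c

/-- the "pressure value" `Φ_*(μ) + h_μ` -/
def eqVal {A : Type} [Fintype A] [MeasurableSpace A] (X : Set (ℕ → A))
    (φ : ℕ → (ℕ → A) → ℝ) (μ : ProbabilityMeasure (ℕ → A)) : EReal :=
  PhiStar (μ : Measure (ℕ → A)) φ + ((ent X (μ : Measure (ℕ → A)) : ℝ) : EReal)

/-- the set of equilibrium states of `Φ` -/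
def EqSet {A : Type} [Fintype A] [MeasurableSpace A] (X : Set (ℕ → A))
    (φ : ℕ → (ℕ → A) → ℝ) : Set (ProbabilityMeasure (ℕ → A)) :=
  {μ | μ ∈ MInv X ∧ eqVal X φ μ = ⨆ η ∈ MInv X, eqVal X φ η}

/-- sequence map induced by a one-block map -/
def blockMap {A B : Type} (π : A → B) : (ℕ → A) → (ℕ → B) := fun x n => π (x n)

/-- pushforward of a probability measure under a one-block map -/
def pushM {A B : Type} [MeasurableSpace A] [MeasurableSpace B] (π : A → B)
    (μ : ProbabilityMeasure (ℕ → A)) : Measure (ℕ → B) :=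
  (μ : Measure (ℕ → A)).map (blockMap π)

/-- conditional equilibrium states of `Φ` over `ν` -/
def CondEqSet {A B : Type} [Fintype A] [MeasurableSpace A] [MeasurableSpace B]
    (X : Set (ℕ → A)) (π : A → B) (φ : ℕ → (ℕ → A) → ℝ) (ν : Measure (ℕ → B)) :
    Set (ProbabilityMeasure (ℕ → A)) :=
  {μ | μ ∈ MInv X ∧ pushM π μ = ν ∧
    eqVal X φ μ = ⨆ η ∈ {η | η ∈ MInv X ∧ pushM π η = ν}, eqVal X φ η}

/-- the projected word function `ψ(J) = Σ_{I : πI = J} φ(I)` -/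
def psiProj {A B : Type} [Fintype A] (X : Set (ℕ → A)) (π : A → B) (φ : List A → ℝ)
    (J : List B) : ℝ :=
  ∑ w : Fin J.length → A,
    if Lang X (List.ofFn w) ∧ List.map π (List.ofFn w) = J then φ (List.ofFn w) else 0

/-- `φ^{(2)}(J) = (Σ_{I : πI = J} φ(I)^{1/a₁})^{a₁}` -/
def phiTwo {A B : Type} [Fintype A] (X : Set (ℕ → A)) (π : A → B) (φ : List A → ℝ)
    (a₁ : ℝ) (J : List B) : ℝ :=
  (∑ w : Fin J.length → A,
    if Lang X (List.ofFn w) ∧ List.map π (List.ofFn w) = J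
    then φ (List.ofFn w) ^ a₁⁻¹ else 0) ^ a₁

/-- `a`-weighted pressure value for `k = 2` -/
def wVal2 {A B : Type} [Fintype A] [Fintype B] [MeasurableSpace A] [MeasurableSpace B]
    (X : Set (ℕ → A)) (Y : Set (ℕ → B)) (π : A → B) (φ : ℕ → (ℕ → A) → ℝ)
    (a₁ a₂ : ℝ) (μ : ProbabilityMeasure (ℕ → A)) : EReal :=
  PhiStar (μ : Measure (ℕ → A)) φ +
    ((a₁ * ent X (μ : Measure (ℕ → A)) + a₂ * ent Y (pushM π μ) : ℝ) : EReal)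

/-- the set of `a`-weighted equilibrium states, `k = 2` -/
def WEqSet2 {A B : Type} [Fintype A] [Fintype B] [MeasurableSpace A] [MeasurableSpace B]
    (X : Set (ℕ → A)) (Y : Set (ℕ → B)) (π : A → B) (φ : ℕ → (ℕ → A) → ℝ)
    (a₁ a₂ : ℝ) : Set (ProbabilityMeasure (ℕ → A)) :=
  {μ | μ ∈ MInv X ∧ wVal2 X Y π φ a₁ a₂ μ = ⨆ η ∈ MInv X, wVal2 X Y π φ a₁ a₂ η}

/-- convexity of a set of probability measures -/
def ConvexPM {Ω : Type*} [MeasurableSpace Ω] (S : Set (ProbabilityMeasure Ω)) : Prop :=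
  ∀ μ₁ ∈ S, ∀ μ₂ ∈ S, ∀ t : ℝ, 0 ≤ t → t ≤ 1 → ∀ μ : ProbabilityMeasure Ω,
    (μ : Measure Ω) = ENNReal.ofReal t • (μ₁ : Measure Ω) +
      ENNReal.ofReal (1 - t) • (μ₂ : Measure Ω) → μ ∈ S

/-- extreme points of a set of probability measures -/
def IsExtremePM {Ω : Type*} [MeasurableSpace Ω] (S : Set (ProbabilityMeasure Ω))
    (μ : ProbabilityMeasure Ω) : Prop :=
  μ ∈ S ∧ ∀ μ₁ ∈ S, ∀ μ₂ ∈ S, ∀ t : ℝ, 0 < t → t < 1 →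
    (μ : Measure Ω) = ENNReal.ofReal t • (μ₁ : Measure Ω) +
      ENNReal.ofReal (1 - t) • (μ₂ : Measure Ω) → μ₁ = μ₂

/-- the class `Ω_w(A*, p)` -/
def OmegaW {A : Type} [Fintype A] (p : ℕ) (f : List A → ℝ) : Prop :=
  (∀ I, 0 ≤ f I ∧ f I ≤ 1) ∧
  ∃ c > (0:ℝ),
    (∀ n : ℕ, ∑ w : Fin n → A, f (List.ofFn w) = 1) ∧
    (∀ I J : List A, ∃ K : List A, K.length ≤ p ∧ c * (f I * f J) ≤ f (I ++ K ++ J)) ∧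
    (∀ I : List A, ∃ i j : A, c * f I ≤ f (i :: I) ∧ c * f I ≤ f (I ++ [j]))

/-- the class `Ω(A*, p)` -/
def OmegaS {A : Type} [Fintype A] (p : ℕ) (f : List A → ℝ) : Prop :=
  (∀ I, 0 ≤ f I ∧ f I ≤ 1) ∧
  ∃ c > (0:ℝ),
    (∀ n : ℕ, ∑ w : Fin n → A, f (List.ofFn w) = 1) ∧
    (∀ I J : List A, ∃ K : List A, K.length = p ∧ c * (f I * f J) ≤ f (I ++ K ++ J))

/-- `f_{m,n}(I)` -/
def fmn {A : Type} [Fintype A] (f : List A → ℝ) (m n : ℕ) (I : List A) : ℝ :=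
  ∑ u : Fin m → A, ∑ v : Fin n → A, f (List.ofFn u ++ I ++ List.ofFn v)

/-- `f*(I) = sup_{m,n} f_{m,n}(I)` -/
def fstar {A : Type} [Fintype A] (f : List A → ℝ) (I : List A) : ℝ :=
  ⨆ m : ℕ, ⨆ n : ℕ, fmn f m n I

/-- the class `D_w(X, p)` -/
def Dw {A : Type} (X : Set (ℕ → A)) (p : ℕ) (φ : List A → ℝ) : Prop :=
  (∀ I, Lang X I → 0 ≤ φ I) ∧ (∃ I, Lang X I ∧ I ≠ [] ∧ 0 < φ I) ∧
  ∃ c : ℝ, 0 < c ∧ c ≤ 1 ∧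
    (∀ I J : List A, Lang X (I ++ J) → φ (I ++ J) ≤ c⁻¹ * φ I * φ J) ∧
    (∀ I J : List A, Lang X I → Lang X J →
      ∃ K : List A, K.length ≤ p ∧ Lang X (I ++ K ++ J) ∧
        c * (φ I * φ J) ≤ φ (I ++ K ++ J))

/-- the class `D(X, p)` -/
def Ds {A : Type} (X : Set (ℕ → A)) (p : ℕ) (φ : List A → ℝ) : Prop :=
  (∀ I, Lang X I → 0 ≤ φ I) ∧ (∃ I, Lang X I ∧ I ≠ [] ∧ 0 < φ I) ∧
  ∃ c : ℝ, 0 < c ∧ c ≤ 1 ∧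
    (∀ I J : List A, Lang X (I ++ J) → φ (I ++ J) ≤ c⁻¹ * φ I * φ J) ∧
    (∀ I J : List A, Lang X I → Lang X J →
      ∃ K : List A, K.length = p ∧ Lang X (I ++ K ++ J) ∧
        c * (φ I * φ J) ≤ φ (I ++ K ++ J))

end

noncomputable section

/-- iterated one-block maps along a chain of alphabets: `tauFrom π j i : B j → B (j+i)` -/
def tauFrom {B : ℕ → Type} (π : ∀ i, B i → B (i+1)) (j : ℕ) : (i : ℕ) → B j → B (j + i)
  | 0 => id
  | (i+1) => fun a => π (j + i) (tauFrom π j i a)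

/-- weighted pressure value along a chain starting at index `j`, with `k` weights `w 0, …, w (k-1)` -/
def wValGen {B : ℕ → Type} [∀ i, Fintype (B i)] [∀ i, MeasurableSpace (B i)]
    (π : ∀ i, B i → B (i+1)) (X : ∀ i, Set (ℕ → B i)) (j k : ℕ) (w : ℕ → ℝ)
    (φ : ℕ → (ℕ → B j) → ℝ) (μ : ProbabilityMeasure (ℕ → B j)) : EReal :=
  PhiStar (μ : Measure (ℕ → B j)) φ +
    ((∑ i ∈ Finset.range k, w i *
      ent (X (j + i)) ((μ : Measure (ℕ → B j)).map (blockMap (tauFrom π j i))) : ℝ) : EReal)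

/-- weighted equilibrium states along a chain -/
def wEqSetGen {B : ℕ → Type} [∀ i, Fintype (B i)] [∀ i, MeasurableSpace (B i)]
    (π : ∀ i, B i → B (i+1)) (X : ∀ i, Set (ℕ → B i)) (j k : ℕ) (w : ℕ → ℝ)
    (φ : ℕ → (ℕ → B j) → ℝ) : Set (ProbabilityMeasure (ℕ → B j)) :=
  {μ | μ ∈ MInv (X j) ∧
    wValGen π X j k w φ μ = ⨆ η ∈ MInv (X j), wValGen π X j k w φ η}

end

/-!
Extend `φ` by zero to a function `ψ` on all words and write `F_n(μ) = H_n(μ) + ∫ log ψ(x₁…xₙ) dμ`.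
Gibbs' inequality `F_n(μ) ≤ log u_n` gives `Φ_*(μ) + h_μ ≤ liminf (1/n) log u_n` for every invariant
`μ` on `X`. For the converse, Gibbs' inequality is an equality for an atomic measure `ρ_n` on `X`
whose masses of `n`-cylinders are proportional to `ψ`. Averaging `ρ_n` along the orbit of the shift,
Misiurewicz's argument yields `F_n(ρ_n) / n ≤ F_m(ν_n) / m + O(1/m) + O(1/n)` for the averages `ν_n`
and every fixed `m`. Functions of finitely many coordinates are continuous, so `F_m` passes to a
weak limit `μ` of the `ν_n` along a sequence realizing the limsup; this `μ` is invariant, and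
`m → ∞` gives `Φ_*(μ) + h_μ ≥ limsup (1/n) log u_n`, up to an arbitrarily small error. Zeros of `ψ`
do no harm: a word with `ψ = 0` occurs in `ν_n` only near the end of the orbit, so `μ` does not
charge it.
-/

section OrbitAverage

variable {Ω : Type*} [MeasurableSpace Ω]

/-- The average `n⁻¹ ∑_{i < n} T^i_* ρ` of the push-forwards of `ρ` along the first `n` iterates
of `T`. For `n = 0` it is the zero measure. -/
noncomputable def orbitAverage (T : Ω → Ω) (ρ : Measure Ω) (n : ℕ) : Measure Ω :=
  (n : ℝ≥0∞)⁻¹ • ∑ i ∈ Finset.range n, ρ.map T^[i]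

lemma isProbabilityMeasure_map_iterate {T : Ω → Ω} (hT : Measurable T) (ρ : Measure Ω)
    [IsProbabilityMeasure ρ] (i : ℕ) : IsProbabilityMeasure (ρ.map T^[i]) :=
  Measure.isProbabilityMeasure_map (hT.iterate i).aemeasurable

lemma ae_orbitAverage {T : Ω → Ω} {ρ : Measure Ω} {n : ℕ} {P : Ω → Prop}
    (h : ∀ i < n, ∀ᵐ x ∂ρ.map T^[i], P x) : ∀ᵐ x ∂orbitAverage T ρ n, P x :=
  Measure.ae_smul_measure
    (ae_finsetSum_measure_iff.2 fun i hi => h i (Finset.mem_range.1 hi)) _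

lemma measureReal_orbitAverage (T : Ω → Ω) (ρ : Measure Ω) [IsFiniteMeasure ρ] (n : ℕ)
    (s : Set Ω) :
    (orbitAverage T ρ n).real s = (n : ℝ)⁻¹ * ∑ i ∈ Finset.range n, (ρ.map T^[i]).real s := by
  simp only [orbitAverage, measureReal_def, Measure.smul_apply, Measure.finsetSum_apply,
    smul_eq_mul, ENNReal.toReal_mul, ENNReal.toReal_inv, ENNReal.toReal_natCast]
  rw [ENNReal.toReal_sum fun i _ => measure_ne_top _ _]

lemma integral_orbitAverage {T : Ω → Ω} (hT : Measurable T) (ρ : Measure Ω) (n : ℕ) {f : Ω → ℝ}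
    (hf : ∀ i, Integrable f (ρ.map T^[i])) :
    ∫ x, f x ∂orbitAverage T ρ n = (n : ℝ)⁻¹ * ∑ i ∈ Finset.range n, ∫ x, f (T^[i] x) ∂ρ := by
  rw [orbitAverage, integral_smul_measure, integral_finsetSum_measure fun i _ => hf i,
    ENNReal.toReal_inv, ENNReal.toReal_natCast, smul_eq_mul]
  exact congrArg _ <| Finset.sum_congr rfl fun i _ =>
    integral_map (hT.iterate i).aemeasurable (hf i).aestronglyMeasurable

lemma isProbabilityMeasure_orbitAverage {T : Ω → Ω} (hT : Measurable T) (ρ : Measure Ω)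
    [IsProbabilityMeasure ρ] {n : ℕ} (hn : n ≠ 0) :
    IsProbabilityMeasure (orbitAverage T ρ n) where
  measure_univ := by
    have := isProbabilityMeasure_map_iterate hT ρ
    simp only [orbitAverage, Measure.smul_apply, Measure.finsetSum_apply, measure_univ,
      Finset.sum_const, Finset.card_range, nsmul_eq_mul, mul_one, smul_eq_mul]
    exact ENNReal.inv_mul_cancel (by exact_mod_cast hn) (ENNReal.natCast_ne_top n)

lemma measureReal_orbitAverage_le {T : Ω → Ω} (hT : Measurable T)
    (ρ : Measure Ω) [IsProbabilityMeasure ρ] {m n : ℕ} {s : Set Ω}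
    (hs : ∀ i, i + m ≤ n → ρ.map T^[i] s = 0) : (orbitAverage T ρ n).real s ≤ m / n := by
  have := isProbabilityMeasure_map_iterate hT ρ
  have hterm : ∀ i ∈ Finset.range n, (ρ.map T^[i]).real s ≤ if n < i + m then 1 else 0 := by
    intro i _
    split_ifs with hi
    · exact measureReal_le_one
    · rw [measureReal_def, hs i (not_lt.1 hi), ENNReal.toReal_zero]
  have hcard : ((Finset.range n).filter fun i => n < i + m).card ≤ m := by
    calc _ ≤ (Finset.Ico (n - m) n).card := Finset.card_le_card fun i hi => by
          rw [Finset.mem_filter, Finset.mem_range] at hi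
          exact Finset.mem_Ico.2 (by omega)
      _ ≤ m := by rw [Nat.card_Ico]; omega
  rw [measureReal_orbitAverage, ← inv_mul_eq_div]
  gcongr
  calc _ ≤ ∑ i ∈ Finset.range n, (if n < i + m then (1 : ℝ) else 0) := Finset.sum_le_sum hterm
    _ ≤ m := by rw [Finset.sum_boole]; exact_mod_cast hcard

variable [TopologicalSpace Ω] [BorelSpace Ω]

lemma abs_integral_comp_sub_integral_orbitAverage_le {T : Ω → Ω} (hT : Continuous T)
    (ρ : Measure Ω) [IsProbabilityMeasure ρ] (n : ℕ) (f : BoundedContinuousFunction Ω ℝ) :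
    |∫ x, f (T x) ∂orbitAverage T ρ n - ∫ x, f x ∂orbitAverage T ρ n| ≤ 2 * ‖f‖ / n := by
  have := isProbabilityMeasure_map_iterate hT.measurable ρ
  have htelescope : ∫ x, f (T x) ∂orbitAverage T ρ n - ∫ x, f x ∂orbitAverage T ρ n =
      (n : ℝ)⁻¹ * (∫ x, f (T^[n] x) ∂ρ - ∫ x, f x ∂ρ) := by
    rw [integral_orbitAverage hT.measurable ρ n fun i => f.integrable _,
      integral_orbitAverage hT.measurable ρ n (f := fun x => f (T x)) fun i =>
        (f.compContinuous ⟨T, hT⟩).integrable _, ← mul_sub, ← Finset.sum_sub_distrib]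
    simp only [← Function.iterate_succ_apply']
    rw [Finset.sum_range_sub fun i => ∫ x, f (T^[i] x) ∂ρ]
    simp only [Function.iterate_zero, id_eq]
  have hbound : ∀ g : BoundedContinuousFunction Ω ℝ, |∫ x, g x ∂ρ| ≤ ‖g‖ := fun g => by
    simpa using g.norm_integral_le_norm ρ
  have hn : |∫ x, f (T^[n] x) ∂ρ| ≤ ‖f‖ :=
    (hbound (f.compContinuous ⟨_, hT.iterate n⟩)).trans (f.norm_compContinuous_le _)
  rw [htelescope, abs_mul, abs_of_nonneg (by positivity), inv_mul_eq_div]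
  gcongr
  calc _ ≤ |∫ x, f (T^[n] x) ∂ρ| + |∫ x, f x ∂ρ| := abs_sub _ _
    _ ≤ 2 * ‖f‖ := by linarith [hbound f]

theorem map_eq_of_tendsto_orbitAverage [HasOuterApproxClosed Ω] {T : Ω → Ω} (hT : Continuous T)
    {ι : Type*} {l : Filter ι} [l.NeBot] {N : ι → ℕ} (hN : Tendsto N l atTop) {ρ : ι → Measure Ω}
    [∀ i, IsProbabilityMeasure (ρ i)] {ν : ι → ProbabilityMeasure Ω}
    (hν : ∀ i, (ν i : Measure Ω) = orbitAverage T (ρ i) (N i)) {μ : ProbabilityMeasure Ω}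
    (hμ : Tendsto ν l (𝓝 μ)) : (μ : Measure Ω).map T = μ := by
  have : IsProbabilityMeasure ((μ : Measure Ω).map T) :=
    Measure.isProbabilityMeasure_map hT.measurable.aemeasurable
  refine ext_of_forall_integral_eq_of_IsFiniteMeasure fun f => ?_
  rw [integral_map hT.measurable.aemeasurable f.continuous.aestronglyMeasurable, ← sub_eq_zero]
  have hweak := ProbabilityMeasure.tendsto_iff_forall_integral_tendsto.1 hμ
  have hlim := (hweak (f.compContinuous ⟨T, hT⟩)).sub (hweak f)
  refine tendsto_nhds_unique hlim (squeeze_zero_norm (fun i => ?_)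
    ((tendsto_const_nhds (x := 2 * ‖f‖)).div_atTop (tendsto_natCast_atTop_atTop.comp hN)))
  rw [hν]
  exact abs_integral_comp_sub_integral_orbitAverage_le hT (ρ i) (N i) f

end OrbitAverage

section SubadditiveCocycle

variable {F : ℕ → ℕ → ℝ} {K : ℝ} {m N : ℕ}

lemma sum_tail_le_sum_blocks (hm : 0 < m)
    (hF : ∀ a b c, a + b + c ≤ N → F a (b + c) ≤ F a b + F (a + b) c)
    (hK : ∀ a, ∀ b ≤ m, |F a b| ≤ K) (a n : ℕ) (han : a + n ≤ N) :
    ∑ j ∈ Finset.range m, F (a + j) (n - j) ≤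
      ∑ i ∈ Finset.range (n + 1 - m), F (a + i) m + m * K := by
  have hshort : ∀ a, ∀ n < m, ∑ j ∈ Finset.range m, F (a + j) (n - j) ≤
      ∑ i ∈ Finset.range (n + 1 - m), F (a + i) m + m * K := fun a n hnm => by
    rw [Nat.sub_eq_zero_of_le hnm, Finset.sum_range_zero, zero_add]
    simpa using Finset.sum_le_card_nsmul (Finset.range m) (fun j => F (a + j) (n - j)) K fun j _ =>
      (le_abs_self _).trans (hK _ _ ((n.sub_le j).trans hnm.le))
  induction n generalizing a with
  | zero => exact hshort a 0 hm
  | succ n ih =>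
    rcases lt_or_ge (n + 1) m with hnm | hmn
    · exact hshort a (n + 1) hnm
    · have hsplit : F a (n + 1) ≤ F a m + F (a + m) (n + 1 - m) := by
        simpa only [Nat.add_sub_cancel' hmn] using hF a m (n + 1 - m) (by omega)
      have hshift : ∑ j ∈ Finset.range m, F (a + j) (n + 1 - j) + F (a + m) (n + 1 - m) =
          ∑ j ∈ Finset.range m, F (a + 1 + j) (n - j) + F a (n + 1) := by
        rw [← Finset.sum_range_succ, Finset.sum_range_succ']
        simp only [Nat.add_sub_add_right, add_zero, tsub_zero, add_right_comm a 1, add_assoc a]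
      rw [show n + 1 + 1 - m = n + 1 - m + 1 by omega, Finset.sum_range_succ']
      have hind := ih (a + 1) (by omega)
      simp only [add_zero, add_assoc a, add_comm 1] at hind hshift ⊢
      linarith

/-- Cut `[0, N)` into blocks of length `m` in each of the `m` possible phases and add up: together
the phases use every `F i m` at most once, and the short pieces at both ends cost `K` each. -/
theorem mul_cocycle_le_sum_blocks (hm : 0 < m) (hmN : m ≤ N)
    (hF : ∀ a b c, a + b + c ≤ N → F a (b + c) ≤ F a b + F (a + b) c)
    (hK : ∀ a, ∀ b ≤ m, |F a b| ≤ K) :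
    m * F 0 N ≤ ∑ i ∈ Finset.range N, F i m + 3 * m * K := by
  have hphase : ∀ j ∈ Finset.range m, F 0 N ≤ K + F (0 + j) (N - j) := fun j hj => by
    have hjm : j < m := Finset.mem_range.1 hj
    calc F 0 N = F 0 (j + (N - j)) := by rw [Nat.add_sub_cancel' (by omega)]
      _ ≤ F 0 j + F (0 + j) (N - j) := hF 0 j (N - j) (by omega)
      _ ≤ K + F (0 + j) (N - j) := by grw [le_abs_self (F 0 j), hK 0 j hjm.le]
  have hsum : m * F 0 N ≤ m * K + ∑ j ∈ Finset.range m, F (0 + j) (N - j) := by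
    simpa [Finset.sum_add_distrib] using Finset.sum_le_sum hphase
  have hlast : -(m * K) ≤ ∑ i ∈ Finset.range (m - 1), F (N + 1 - m + i) m := by
    have hK0 : 0 ≤ K := (abs_nonneg _).trans (hK 0 0 m.zero_le)
    have hcard := Finset.card_nsmul_le_sum (Finset.range (m - 1))
      (fun i => F (N + 1 - m + i) m) (-K) fun i _ => neg_le_of_abs_le (hK _ _ le_rfl)
    have hpred : ((m - 1 : ℕ) : ℝ) ≤ m := by exact_mod_cast m.sub_le 1
    rw [Finset.card_range, nsmul_eq_mul] at hcard
    nlinarith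
  have hrange : ∑ i ∈ Finset.range N, F i m = ∑ i ∈ Finset.range (N + 1 - m), F (0 + i) m +
      ∑ i ∈ Finset.range (m - 1), F (N + 1 - m + i) m := by
    simp only [zero_add]
    rw [← Finset.sum_range_add, show N + 1 - m + (m - 1) = N by omega]
  have hblocks := sum_tail_le_sum_blocks hm hF hK 0 N (zero_add N).le
  linarith

end SubadditiveCocycle

section Words

variable {A : Type}

lemma iterate_shiftMap_apply (k : ℕ) (x : ℕ → A) (n : ℕ) : shiftMap^[k] x n = x (n + k) := by
  induction k generalizing x with
  | zero => rfl
  | succ k ih => rw [Function.iterate_succ_apply, ih]; rfl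

lemma length_wordOf (x : ℕ → A) (n : ℕ) : (wordOf x n).length = n := List.length_ofFn

lemma wordOf_add (x : ℕ → A) (m n : ℕ) :
    wordOf x (m + n) = wordOf x m ++ wordOf (shiftMap^[m] x) n := by
  simp only [wordOf, List.ofFn_add, iterate_shiftMap_apply, Fin.val_castLE, Fin.val_natAdd,
    add_comm]

lemma mem_cyl_ofFn {n : ℕ} (x : ℕ → A) (w : Fin n → A) :
    x ∈ cyl (List.ofFn w) ↔ wordOf x n = List.ofFn w := by
  rw [wordOf, List.ofFn_inj, funext_iff]
  exact ⟨fun h i => by simpa using h (i.cast List.length_ofFn.symm),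
    fun h i => (h (i.cast List.length_ofFn)).trans (List.get_ofFn w i).symm⟩

lemma mem_cyl_iff (x : ℕ → A) (I : List A) : x ∈ cyl I ↔ wordOf x I.length = I := by
  simpa only [List.ofFn_get] using mem_cyl_ofFn x I.get

lemma mem_cyl_wordOf (x : ℕ → A) (n : ℕ) : x ∈ cyl (wordOf x n) :=
  (mem_cyl_ofFn x _).2 rfl

lemma lang_wordOf {X : Set (ℕ → A)} {x : ℕ → A} (hx : x ∈ X) (n : ℕ) : Lang X (wordOf x n) :=
  ⟨x, mem_cyl_wordOf x n, hx⟩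

lemma sum_words_add [Fintype A] (m n : ℕ) (g : List A → ℝ) :
    ∑ w : Fin (m + n) → A, g (List.ofFn w) =
      ∑ u : Fin m → A, ∑ v : Fin n → A, g (List.ofFn u ++ List.ofFn v) := by
  rw [← Fintype.sum_prod_type', ← (Fin.appendEquiv m n).sum_comp]
  refine Finset.sum_congr rfl fun x _ => ?_
  rw [← List.ofFn_fin_append]
  rfl

end Words

section WordIntegrals

variable {A : Type} [MeasurableSpace A]

lemma measurable_shiftMap : Measurable (shiftMap : (ℕ → A) → ℕ → A) :=
  measurable_pi_lambda _ fun _ => measurable_pi_apply _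

lemma ae_comp_wordOf [Finite A] {μ : Measure (ℕ → A)} {n : ℕ} {P : List A → Prop}
    (h : ∀ w : Fin n → A, μ (cyl (List.ofFn w)) ≠ 0 → P (List.ofFn w)) :
    ∀ᵐ x ∂μ, P (wordOf x n) := by
  have hnull : ∀ᵐ x ∂μ, ∀ w : Fin n → A, μ (cyl (List.ofFn w)) = 0 → x ∉ cyl (List.ofFn w) :=
    ae_all_iff.2 fun w => by
      by_cases hw : μ (cyl (List.ofFn w)) = 0
      · simpa only [hw, forall_const] using measure_eq_zero_iff_ae_notMem.1 hw
      · exact ae_of_all _ fun _ h => absurd h hw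
  filter_upwards [hnull] with x hx
  exact h _ fun h0 => hx _ h0 (mem_cyl_wordOf x n)

lemma of_ae_comp_wordOf {μ : Measure (ℕ → A)} {n : ℕ} {P : List A → Prop}
    (h : ∀ᵐ x ∂μ, P (wordOf x n)) {w : Fin n → A} (hw : μ (cyl (List.ofFn w)) ≠ 0) :
    P (List.ofFn w) := by
  by_contra hP
  refine hw (measure_mono_null (fun x hx => ?_) h)
  rwa [Set.mem_compl_iff, Set.mem_ofPred_eq, (mem_cyl_ofFn x w).1 hx]

lemma ae_measureReal_cyl_pos [Finite A] (μ : Measure (ℕ → A)) [IsFiniteMeasure μ] (n : ℕ) :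
    ∀ᵐ x ∂μ, 0 < μ.real (cyl (wordOf x n)) :=
  ae_comp_wordOf (P := fun I => 0 < μ.real (cyl I)) fun _ hw =>
    ENNReal.toReal_pos hw (measure_ne_top _ _)

variable [MeasurableSingletonClass A]

lemma measurableSet_cyl (I : List A) : MeasurableSet (cyl I) := by
  simp only [cyl, Set.ofPred_forall]
  exact .iInter fun i => measurable_pi_apply _ (measurableSet_singleton _)

lemma measurable_comp_wordOf [Finite A] {E : Type*} [MeasurableSpace E] (g : List A → E) (n : ℕ) :
    Measurable fun x : ℕ → A => g (wordOf x n) :=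
  (measurable_of_finite fun w : Fin n → A => g (List.ofFn w)).comp (by fun_prop)

lemma integrable_comp_wordOf [Finite A] (μ : Measure (ℕ → A)) [IsFiniteMeasure μ]
    (g : List A → ℝ) (n : ℕ) : Integrable (fun x => g (wordOf x n)) μ :=
  .comp_measurable (f := fun (x : ℕ → A) (i : Fin n) => x i) (g := fun w => g (List.ofFn w))
    .of_finite (by fun_prop)

variable [Fintype A]

lemma integral_comp_wordOf (μ : Measure (ℕ → A)) [IsFiniteMeasure μ] (g : List A → ℝ) (n : ℕ) :
    ∫ x, g (wordOf x n) ∂μ =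
      ∑ w : Fin n → A, μ.real (cyl (List.ofFn w)) * g (List.ofFn w) := by
  have hrestr : Measurable fun (x : ℕ → A) (i : Fin n) => x i := by fun_prop
  calc ∫ x, g (wordOf x n) ∂μ
      = ∫ w, g (List.ofFn w) ∂μ.map fun x (i : Fin n) => x i :=
        (integral_map (f := fun w => g (List.ofFn w)) hrestr.aemeasurable
          (measurable_of_finite _).aestronglyMeasurable).symm
    _ = ∑ w : Fin n → A, μ.real (cyl (List.ofFn w)) * g (List.ofFn w) := by
        rw [integral_fintype .of_finite]
        refine Finset.sum_congr rfl fun w _ => ?_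
        rw [map_measureReal_apply hrestr (measurableSet_singleton w), smul_eq_mul]
        congr 2
        ext x
        rw [mem_cyl_ofFn, wordOf, List.ofFn_inj, Set.mem_preimage, Set.mem_singleton_iff]

lemma sum_measureReal_cyl (μ : Measure (ℕ → A)) [IsProbabilityMeasure μ] (n : ℕ) :
    ∑ w : Fin n → A, μ.real (cyl (List.ofFn w)) = 1 := by
  simpa using (integral_comp_wordOf μ (fun _ => 1) n).symm

end WordIntegrals

section FreeEnergy

variable {A : Type} [Fintype A]

/-- The sum `∑_{|I| = n} ψ(I)` of a word function, the `u_n` of the variational principle. -/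
noncomputable def partitionSum (ψ : List A → ℝ) (n : ℕ) : ℝ :=
  ∑ w : Fin n → A, ψ (List.ofFn w)

variable [MeasurableSpace A]

/-- The Shannon entropy of the partition into `n`-cylinders: the block entropy `Hblock` without
reference to a subshift, for measures which need be neither invariant nor supported on one. -/
noncomputable def wordEntropy (μ : Measure (ℕ → A)) (n : ℕ) : ℝ :=
  ∑ w : Fin n → A, Real.negMulLog (μ.real (cyl (List.ofFn w)))

/-- The free energy `H_n(μ) + ∫ log ψ(x₁…xₙ) dμ` of a word function `ψ` at level `n`. Since
`Real.log 0 = 0` it is meaningful only where `ψ(x₁…xₙ)` is almost everywhere positive. -/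
noncomputable def freeEnergy (ψ : List A → ℝ) (μ : Measure (ℕ → A)) (n : ℕ) : ℝ :=
  wordEntropy μ n + ∫ x, Real.log (ψ (wordOf x n)) ∂μ

lemma partitionSum_pos_of_ae {ψ : List A → ℝ} (hψ : ∀ I, 0 ≤ ψ I) {μ : Measure (ℕ → A)} [NeZero μ]
    {n : ℕ} (hpos : ∀ᵐ x ∂μ, 0 < ψ (wordOf x n)) : 0 < partitionSum ψ n := by
  obtain ⟨x, hx⟩ := hpos.exists
  exact hx.trans_le <| Finset.single_le_sum (f := fun w : Fin n → A => ψ (List.ofFn w))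
    (fun _ _ => hψ _) (Finset.mem_univ fun i : Fin n => x i)

variable [MeasurableSingletonClass A]

lemma wordEntropy_eq_neg_integral (μ : Measure (ℕ → A)) [IsFiniteMeasure μ] (n : ℕ) :
    wordEntropy μ n = -∫ x, Real.log (μ.real (cyl (wordOf x n))) ∂μ := by
  rw [integral_comp_wordOf μ (fun I => Real.log (μ.real (cyl I))), ← Finset.sum_neg_distrib]
  simp only [wordEntropy, Real.negMulLog, neg_mul]

lemma freeEnergy_eq_sum (ψ : List A → ℝ) (μ : Measure (ℕ → A)) [IsFiniteMeasure μ] (n : ℕ) :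
    freeEnergy ψ μ n = ∑ w : Fin n → A, (Real.negMulLog (μ.real (cyl (List.ofFn w))) +
      μ.real (cyl (List.ofFn w)) * Real.log (ψ (List.ofFn w))) := by
  rw [freeEnergy, wordEntropy, integral_comp_wordOf μ (fun I => Real.log (ψ I)),
    Finset.sum_add_distrib]

lemma integral_div_measureReal_cyl_le {ψ : List A → ℝ} (hψ : ∀ I, 0 ≤ ψ I) (μ : Measure (ℕ → A))
    [IsFiniteMeasure μ] (n : ℕ) :
    ∫ x, ψ (wordOf x n) / μ.real (cyl (wordOf x n)) ∂μ ≤ partitionSum ψ n := by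
  rw [integral_comp_wordOf μ fun I => ψ I / μ.real (cyl I)]
  exact Finset.sum_le_sum fun w _ => by
    rw [mul_div_left_comm]
    exact mul_le_of_le_one_right (hψ _) (div_self_le_one _)

theorem freeEnergy_le_log_partitionSum {ψ : List A → ℝ} (hψ : ∀ I, 0 ≤ ψ I) (μ : Measure (ℕ → A))
    [IsProbabilityMeasure μ] {n : ℕ} (hpos : ∀ᵐ x ∂μ, 0 < ψ (wordOf x n)) :
    freeEnergy ψ μ n ≤ Real.log (partitionSum ψ n) := by
  set U := partitionSum ψ n
  have hU : 0 < U := partitionSum_pos_of_ae hψ hpos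
  set p : List A → ℝ := fun I => μ.real (cyl I)
  have hlog : Integrable (fun x => Real.log (ψ (wordOf x n))) μ :=
    integrable_comp_wordOf μ (fun I => Real.log (ψ I)) n
  have hp : Integrable (fun x => Real.log (p (wordOf x n))) μ :=
    integrable_comp_wordOf μ (fun I => Real.log (p I)) n
  have hdiff : Integrable (fun x => Real.log (ψ (wordOf x n)) - Real.log (p (wordOf x n))) μ :=
    hlog.sub hp
  have hpointwise : ∀ᵐ x ∂μ, Real.log (ψ (wordOf x n)) - Real.log (p (wordOf x n)) - Real.log U ≤
      ψ (wordOf x n) / p (wordOf x n) / U - 1 := by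
    filter_upwards [hpos, ae_measureReal_cyl_pos μ n] with x hψx hpx
    rw [← Real.log_div hψx.ne' hpx.ne', ← Real.log_div (div_pos hψx hpx).ne' hU.ne']
    exact Real.log_le_sub_one_of_pos (div_pos (div_pos hψx hpx) hU)
  have hint : freeEnergy ψ μ n - Real.log U ≤
      (∫ x, ψ (wordOf x n) / p (wordOf x n) ∂μ) / U - 1 := by
    calc freeEnergy ψ μ n - Real.log U
        = ∫ x, (Real.log (ψ (wordOf x n)) - Real.log (p (wordOf x n)) - Real.log U) ∂μ := by
          rw [integral_sub hdiff (integrable_const _), integral_sub hlog hp,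
            freeEnergy, wordEntropy_eq_neg_integral]
          simp [p, neg_add_eq_sub]
      _ ≤ ∫ x, (ψ (wordOf x n) / p (wordOf x n) / U - 1) ∂μ :=
          integral_mono_ae (hdiff.sub (integrable_const _))
            (integrable_comp_wordOf μ (fun I => ψ I / p I / U - 1) n) hpointwise
      _ = (∫ x, ψ (wordOf x n) / p (wordOf x n) ∂μ) / U - 1 := by
          rw [integral_sub (integrable_comp_wordOf μ (fun I => ψ I / p I / U) n)
            (integrable_const _), integral_div]
          simp
  have hratio : (∫ x, ψ (wordOf x n) / p (wordOf x n) ∂μ) / U ≤ 1 :=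
    (div_le_one hU).2 (integral_div_measureReal_cyl_le hψ μ n)
  linarith

lemma abs_freeEnergy_le (ψ : List A → ℝ) (μ : Measure (ℕ → A)) [IsProbabilityMeasure μ] (n : ℕ) :
    |freeEnergy ψ μ n| ≤ ∑ w : Fin n → A, (1 + |Real.log (ψ (List.ofFn w))|) := by
  rw [freeEnergy_eq_sum]
  refine (Finset.abs_sum_le_sum_abs _ _).trans (Finset.sum_le_sum fun w _ => ?_)
  set p := μ.real (cyl (List.ofFn w))
  have hp0 : 0 ≤ p := measureReal_nonneg
  have hp1 : p ≤ 1 := measureReal_le_one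
  refine (abs_add_le _ _).trans (add_le_add ?_ ?_)
  · rw [abs_of_nonneg (Real.negMulLog_nonneg hp0 hp1)]
    linarith [Real.negMulLog_le_one_sub_self hp0]
  · rw [abs_mul, abs_of_nonneg hp0]
    exact mul_le_of_le_one_left (abs_nonneg _) hp1

end FreeEnergy

section Subadditivity

/-- A nonnegative word function with `ψ(IJ) ≤ C ψ(I) ψ(J)` for all words. A sub-multiplicative
function on the language of `X` becomes one of these when extended by zero, see `extendZero`. -/
structure SubmultWith {A : Type} (C : ℝ) (ψ : List A → ℝ) : Prop where
  const_pos : 0 < C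
  nonneg (I : List A) : 0 ≤ ψ I
  append_le (I J : List A) : ψ (I ++ J) ≤ C * ψ I * ψ J

namespace SubmultWith

variable {A : Type} {C : ℝ} {ψ : List A → ℝ}

lemma pos_left (hψ : SubmultWith C ψ) {I J : List A} (h : 0 < ψ (I ++ J)) : 0 < ψ I := by
  refine (hψ.nonneg I).lt_of_ne' fun h0 => (hψ.append_le I J).not_gt ?_
  simpa only [h0, mul_zero, zero_mul] using h

lemma pos_right (hψ : SubmultWith C ψ) {I J : List A} (h : 0 < ψ (I ++ J)) : 0 < ψ J := by
  refine (hψ.nonneg J).lt_of_ne' fun h0 => (hψ.append_le I J).not_gt ?_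
  simpa only [h0, mul_zero] using h

lemma log_append_le (hψ : SubmultWith C ψ) {I J : List A} (h : 0 < ψ (I ++ J)) :
    Real.log (ψ (I ++ J)) ≤ Real.log (ψ I) + Real.log (ψ J) + Real.log C := by
  have hI := hψ.pos_left h
  have hJ := hψ.pos_right h
  rw [← Real.log_mul hI.ne' hJ.ne', ← Real.log_mul (mul_pos hI hJ).ne' hψ.const_pos.ne', mul_comm,
    ← mul_assoc]
  exact Real.log_le_log h (hψ.append_le I J)

lemma pos_wordOf_iterate (hψ : SubmultWith C ψ) {x : ℕ → A} {i m n : ℕ} (him : i + m ≤ n)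
    (h : 0 < ψ (wordOf x n)) : 0 < ψ (wordOf (shiftMap^[i] x) m) := by
  obtain ⟨k, rfl⟩ := Nat.exists_eq_add_of_le him
  rw [wordOf_add, wordOf_add] at h
  exact hψ.pos_right (hψ.pos_left h)

lemma ae_map_iterate_pos [Finite A] [MeasurableSpace A] [MeasurableSingletonClass A]
    (hψ : SubmultWith C ψ) {μ : Measure (ℕ → A)} {i m n : ℕ} (him : i + m ≤ n)
    (h : ∀ᵐ x ∂μ, 0 < ψ (wordOf x n)) :
    ∀ᵐ x ∂μ.map shiftMap^[i], 0 < ψ (wordOf x m) := by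
  rw [ae_map_iff (measurable_shiftMap.iterate i).aemeasurable
    (measurableSet_lt measurable_const (measurable_comp_wordOf ψ m))]
  exact h.mono fun x => hψ.pos_wordOf_iterate him

end SubmultWith

variable {A : Type} [MeasurableSpace A] [MeasurableSingletonClass A]

lemma integral_comp_wordOf_map_iterate [Finite A] (μ : Measure (ℕ → A)) (g : List A → ℝ)
    (m n : ℕ) :
    ∫ x, g (wordOf x n) ∂μ.map shiftMap^[m] = ∫ x, g (wordOf (shiftMap^[m] x) n) ∂μ :=
  integral_map (measurable_shiftMap.iterate m).aemeasurable
    (measurable_comp_wordOf g n).aestronglyMeasurable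

lemma integrable_comp_wordOf_iterate [Finite A] (μ : Measure (ℕ → A)) [IsFiniteMeasure μ]
    (g : List A → ℝ) (m n : ℕ) : Integrable (fun x => g (wordOf (shiftMap^[m] x) n)) μ :=
  (integrable_comp_wordOf (μ.map shiftMap^[m]) g n).comp_measurable (measurable_shiftMap.iterate m)

lemma integral_log_mul {Ω : Type*} [MeasurableSpace Ω] {μ : Measure Ω} {f g : Ω → ℝ}
    (hf : ∀ᵐ x ∂μ, 0 < f x) (hg : ∀ᵐ x ∂μ, 0 < g x)
    (hf_int : Integrable (fun x => Real.log (f x)) μ)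
    (hg_int : Integrable (fun x => Real.log (g x)) μ) :
    ∫ x, Real.log (f x * g x) ∂μ = ∫ x, Real.log (f x) ∂μ + ∫ x, Real.log (g x) ∂μ := by
  rw [← integral_add hf_int hg_int]
  refine integral_congr_ae ?_
  filter_upwards [hf, hg] with x hfx hgx
  exact Real.log_mul hfx.ne' hgx.ne'

variable [Fintype A]

theorem wordEntropy_add_le (μ : Measure (ℕ → A)) [IsProbabilityMeasure μ] (m n : ℕ) :
    wordEntropy μ (m + n) ≤ wordEntropy μ m + wordEntropy (μ.map shiftMap^[m]) n := by
  set ν := μ.map shiftMap^[m]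
  have : IsProbabilityMeasure ν := isProbabilityMeasure_map_iterate measurable_shiftMap μ m
  set p : List A → ℝ := fun I => μ.real (cyl I)
  set q : List A → ℝ := fun I => ν.real (cyl I)
  let ψ : List A → ℝ := fun I => p (I.take m) * q (I.drop m)
  have hψ_append : ∀ I J : List A, I.length = m → ψ (I ++ J) = p I * q J := fun I J hI => by
    simp only [ψ, List.take_left' hI, List.drop_left' hI]
  have hψ_wordOf : ∀ x, ψ (wordOf x (m + n)) = p (wordOf x m) * q (wordOf (shiftMap^[m] x) n) :=
    fun x => by rw [wordOf_add, hψ_append _ _ (length_wordOf x m)]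
  have hp : ∀ᵐ x ∂μ, 0 < p (wordOf x m) := ae_measureReal_cyl_pos μ m
  have hq : ∀ᵐ x ∂μ, 0 < q (wordOf (shiftMap^[m] x) n) :=
    ae_of_ae_map (measurable_shiftMap.iterate m).aemeasurable (ae_measureReal_cyl_pos ν n)
  have hsum : partitionSum ψ (m + n) = 1 := by
    simp only [partitionSum, sum_words_add, hψ_append _ _ List.length_ofFn, ← Finset.sum_mul_sum]
    simp only [p, q, sum_measureReal_cyl, mul_one]
  have hint : ∫ x, Real.log (ψ (wordOf x (m + n))) ∂μ = -wordEntropy μ m - wordEntropy ν n := by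
    simp only [hψ_wordOf]
    rw [integral_log_mul hp hq (integrable_comp_wordOf μ (fun I => Real.log (p I)) m)
      (integrable_comp_wordOf_iterate μ (fun I => Real.log (q I)) m n),
      ← integral_comp_wordOf_map_iterate μ (fun I => Real.log (q I)),
      wordEntropy_eq_neg_integral μ, wordEntropy_eq_neg_integral ν, neg_neg, sub_neg_eq_add]
  have hgibbs : freeEnergy ψ μ (m + n) ≤ Real.log (partitionSum ψ (m + n)) := by
    refine freeEnergy_le_log_partitionSum
      (fun I => mul_nonneg measureReal_nonneg measureReal_nonneg) μ ?_
    filter_upwards [hp, hq] with x hpx hqx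
    exact (mul_pos hpx hqx).trans_eq (hψ_wordOf x).symm
  rw [freeEnergy, hint, hsum, Real.log_one] at hgibbs
  linarith

theorem SubmultWith.freeEnergy_add_le {C : ℝ} {ψ : List A → ℝ} (hψ : SubmultWith C ψ)
    (μ : Measure (ℕ → A)) [IsProbabilityMeasure μ] {m n : ℕ}
    (hpos : ∀ᵐ x ∂μ, 0 < ψ (wordOf x (m + n))) :
    freeEnergy ψ μ (m + n) ≤
      freeEnergy ψ μ m + freeEnergy ψ (μ.map shiftMap^[m]) n + Real.log C := by
  have hm : Integrable (fun x => Real.log (ψ (wordOf x m))) μ :=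
    integrable_comp_wordOf μ (fun I => Real.log (ψ I)) m
  have hn : Integrable (fun x => Real.log (ψ (wordOf (shiftMap^[m] x) n))) μ :=
    integrable_comp_wordOf_iterate μ (fun I => Real.log (ψ I)) m n
  have hint : ∫ x, Real.log (ψ (wordOf x (m + n))) ∂μ ≤
      ∫ x, Real.log (ψ (wordOf x m)) ∂μ + ∫ x, Real.log (ψ (wordOf (shiftMap^[m] x) n)) ∂μ +
        Real.log C := by
    have hmn : Integrable (fun x => Real.log (ψ (wordOf x m)) +
        Real.log (ψ (wordOf (shiftMap^[m] x) n))) μ := hm.add hn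
    calc ∫ x, Real.log (ψ (wordOf x (m + n))) ∂μ
        ≤ ∫ x, ((Real.log (ψ (wordOf x m)) + Real.log (ψ (wordOf (shiftMap^[m] x) n))) +
            Real.log C) ∂μ := by
          refine integral_mono_ae (integrable_comp_wordOf μ (fun I => Real.log (ψ I)) _)
            (hmn.add (integrable_const _)) (hpos.mono fun x hx => ?_)
          simp only [wordOf_add] at hx ⊢
          exact hψ.log_append_le hx
      _ = _ := by
          rw [integral_add hmn (integrable_const _), integral_add hm hn]
          simp only [integral_const, probReal_univ, one_smul]
  have hent := wordEntropy_add_le μ m n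
  simp only [freeEnergy, integral_comp_wordOf_map_iterate μ fun I => Real.log (ψ I)]
  linarith

end Subadditivity

section OrbitFreeEnergy

variable {A : Type} [Fintype A] [MeasurableSpace A] [MeasurableSingletonClass A]

lemma sum_freeEnergy_le_freeEnergy_orbitAverage (ψ : List A → ℝ) (ρ : Measure (ℕ → A))
    [IsProbabilityMeasure ρ] {n : ℕ} (hn : n ≠ 0) (m : ℕ) :
    ∑ i ∈ Finset.range n, freeEnergy ψ (ρ.map shiftMap^[i]) m ≤
      n * freeEnergy ψ (orbitAverage shiftMap ρ n) m := by
  have hn' : (n : ℝ) ≠ 0 := by exact_mod_cast hn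
  have := isProbabilityMeasure_orbitAverage measurable_shiftMap ρ hn
  have := isProbabilityMeasure_map_iterate measurable_shiftMap ρ
  simp only [freeEnergy_eq_sum]
  rw [Finset.sum_comm, Finset.mul_sum]
  refine Finset.sum_le_sum fun w _ => ?_
  set p : ℕ → ℝ := fun i => (ρ.map shiftMap^[i]).real (cyl (List.ofFn w))
  have hconcave : ∑ i ∈ Finset.range n, (n : ℝ)⁻¹ * Real.negMulLog (p i) ≤
      Real.negMulLog (∑ i ∈ Finset.range n, (n : ℝ)⁻¹ * p i) := by
    refine Real.concaveOn_negMulLog.le_map_sum (fun _ _ => by positivity) ?_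
      fun _ _ => measureReal_nonneg
    simp [hn']
  rw [← Finset.mul_sum, ← Finset.mul_sum, inv_mul_le_iff₀ (by positivity)] at hconcave
  rw [measureReal_orbitAverage, Finset.sum_add_distrib, ← Finset.sum_mul, mul_add, ← mul_assoc,
    mul_inv_cancel_left₀ hn']
  gcongr

/-- Misiurewicz's argument: cut the orbit of `ρ` into blocks of length `m` in all `m` phases, then
use concavity of the entropy. -/
theorem SubmultWith.exists_freeEnergy_le_orbitAverage {C : ℝ} {ψ : List A → ℝ}
    (hψ : SubmultWith C ψ) {m : ℕ} (hm : 0 < m) :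
    ∃ K : ℝ, ∀ n ≥ m, ∀ ρ : Measure (ℕ → A), IsProbabilityMeasure ρ →
      (∀ᵐ x ∂ρ, 0 < ψ (wordOf x n)) →
        m * freeEnergy ψ ρ n ≤
          n * (freeEnergy ψ (orbitAverage shiftMap ρ n) m + Real.log C) + K := by
  set B : ℕ → ℝ := fun b => ∑ w : Fin b → A, (1 + |Real.log (ψ (List.ofFn w))|)
  have hB : ∀ b, 0 ≤ B b := fun b => Finset.sum_nonneg fun _ _ => by positivity
  set K := ∑ b ∈ Finset.range (m + 1), B b + |Real.log C|
  refine ⟨3 * m * K - m * Real.log C, fun n hmn ρ _ hpos => ?_⟩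
  have hprob := isProbabilityMeasure_map_iterate measurable_shiftMap ρ
  set F : ℕ → ℕ → ℝ := fun a b => freeEnergy ψ (ρ.map shiftMap^[a]) b + Real.log C
  have hF : ∀ a b c, a + b + c ≤ n → F a (b + c) ≤ F a b + F (a + b) c := fun a b c habc => by
    have hadd := hψ.freeEnergy_add_le (ρ.map shiftMap^[a]) (m := b) (n := c)
      (hψ.ae_map_iterate_pos (by omega) hpos)
    rw [Measure.map_map (measurable_shiftMap.iterate b) (measurable_shiftMap.iterate a),
      ← Function.iterate_add, add_comm b a] at hadd
    simp only [F]
    linarith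
  have hFK : ∀ a, ∀ b ≤ m, |F a b| ≤ K := fun a b hb =>
    (abs_add_le _ _).trans <| add_le_add ((abs_freeEnergy_le ψ _ b).trans <|
      Finset.single_le_sum (fun b _ => hB b) (Finset.mem_range.2 (Nat.lt_succ_of_le hb))) le_rfl
  have hblocks := mul_cocycle_le_sum_blocks hm hmn hF hFK
  have hconcave := sum_freeEnergy_le_freeEnergy_orbitAverage ψ ρ (by omega : n ≠ 0) m
  simp only [F, Function.iterate_zero, Measure.map_id, Finset.sum_add_distrib, Finset.sum_const,
    Finset.card_range, nsmul_eq_mul] at hblocks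
  linarith

end OrbitFreeEnergy

section GibbsMeasure

variable {A : Type} [Fintype A] [MeasurableSpace A] [MeasurableSingletonClass A]

lemma exists_measureReal_cyl_eq {X : Set (ℕ → A)} {p : List A → ℝ} (hp : ∀ I, 0 ≤ p I)
    (hlang : ∀ I, 0 < p I → Lang X I) {n : ℕ} (hp_sum : partitionSum p n = 1) :
    ∃ ρ : Measure (ℕ → A), IsProbabilityMeasure ρ ∧ (∀ᵐ x ∂ρ, x ∈ X) ∧
      ∀ w : Fin n → A, ρ.real (cyl (List.ofFn w)) = p (List.ofFn w) := by
  obtain ⟨w₀, -, hw₀⟩ := (Finset.sum_pos_iff_of_nonneg fun w _ => hp (List.ofFn w)).1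
    (zero_lt_one.trans_eq hp_sum.symm)
  have : Nonempty (ℕ → A) := (hlang _ hw₀).to_type
  have hpoint : ∀ w : Fin n → A, 0 < p (List.ofFn w) → ∃ x ∈ X, wordOf x n = List.ofFn w :=
    fun w hw => (hlang _ hw).elim fun x hx => ⟨x, hx.2, (mem_cyl_ofFn x w).1 hx.1⟩
  choose! x hxX hxw using hpoint
  refine ⟨∑ w : Fin n → A, ENNReal.ofReal (p (List.ofFn w)) • Measure.dirac (x w), ⟨?_⟩, ?_,
    fun v => ?_⟩
  · simp only [Measure.finsetSum_apply, Measure.smul_apply, measure_univ, smul_eq_mul, mul_one]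
    rw [← ENNReal.ofReal_sum_of_nonneg fun _ _ => hp _]
    exact (congrArg _ hp_sum).trans ENNReal.ofReal_one
  · refine ae_finsetSum_measure_iff.2 fun w _ => ?_
    rcases (hp (List.ofFn w)).eq_or_lt with hw | hw
    · simp only [← hw, ENNReal.ofReal_zero, zero_smul, ae_zero, eventually_bot]
    · refine Measure.ae_smul_measure ?_ _
      rw [ae_dirac_eq]
      exact hxX w hw
  · have hterm : ∀ w : Fin n → A, ENNReal.ofReal (p (List.ofFn w)) *
        (cyl (List.ofFn v)).indicator 1 (x w) =
          if w = v then ENNReal.ofReal (p (List.ofFn w)) else 0 := fun w => by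
      rcases (hp (List.ofFn w)).eq_or_lt with hw | hw
      · simp only [← hw, ENNReal.ofReal_zero, zero_mul, ite_self]
      · simp only [Set.indicator_apply, mem_cyl_ofFn, hxw w hw, List.ofFn_inj, Pi.one_apply,
          mul_ite, mul_one, mul_zero]
    simp only [measureReal_def, Measure.finsetSum_apply, Measure.smul_apply, smul_eq_mul,
      Measure.dirac_apply' _ (measurableSet_cyl _), hterm, Finset.sum_ite_eq', Finset.mem_univ,
      if_true]
    exact ENNReal.toReal_ofReal (hp _)

/-- Equality in the Gibbs inequality is attained by an atomic measure giving each `n`-cylinder a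
mass proportional to `ψ`. -/
theorem exists_freeEnergy_eq_log_partitionSum {X : Set (ℕ → A)} {ψ : List A → ℝ}
    (hψ : ∀ I, 0 ≤ ψ I) (hlang : ∀ I, 0 < ψ I → Lang X I) {n : ℕ} (hU : 0 < partitionSum ψ n) :
    ∃ ρ : Measure (ℕ → A), IsProbabilityMeasure ρ ∧ (∀ᵐ x ∂ρ, x ∈ X) ∧
      (∀ᵐ x ∂ρ, 0 < ψ (wordOf x n)) ∧ freeEnergy ψ ρ n = Real.log (partitionSum ψ n) := by
  set U := partitionSum ψ n
  obtain ⟨ρ, hρ, hρX, hmass⟩ := exists_measureReal_cyl_eq (p := fun I => ψ I / U) (n := n)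
    (fun I => div_nonneg (hψ I) hU.le) (fun I hI => hlang I ((div_pos_iff_of_pos_right hU).1 hI))
    ((Finset.sum_div ..).symm.trans (div_self hU.ne'))
  refine ⟨ρ, hρ, hρX, ae_comp_wordOf (P := fun I => 0 < ψ I) fun w hw => ?_, ?_⟩
  · rw [← div_pos_iff_of_pos_right hU, ← hmass]
    exact ENNReal.toReal_pos hw (measure_ne_top _ _)
  · have hterm : ∀ w : Fin n → A, Real.negMulLog (ψ (List.ofFn w) / U) +
        ψ (List.ofFn w) / U * Real.log (ψ (List.ofFn w)) =
          ψ (List.ofFn w) * (Real.log U / U) := fun w => by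
      rcases (hψ (List.ofFn w)).eq_or_lt with hw | hw
      · simp only [← hw, zero_div, Real.negMulLog_zero, zero_mul, add_zero]
      · rw [Real.negMulLog, Real.log_div hw.ne' hU.ne']
        ring
    simp only [freeEnergy_eq_sum, hmass, hterm, ← Finset.sum_mul]
    exact mul_div_cancel₀ _ hU.ne'

end GibbsMeasure

section WeakLimits

lemma continuous_shiftMap {A : Type} [TopologicalSpace A] :
    Continuous (shiftMap : (ℕ → A) → ℕ → A) :=
  continuous_pi fun _ => continuous_apply _

lemma isClopen_cyl {A : Type} [TopologicalSpace A] [DiscreteTopology A] (I : List A) :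
    IsClopen (cyl I) := by
  simp only [cyl, Set.ofPred_forall]
  exact isClopen_iInter_of_finite fun i =>
    (isClopen_discrete {I.get i}).preimage (continuous_apply _)

lemma measure_eq_one_of_tendsto {Ω ι : Type*} [TopologicalSpace Ω] [MeasurableSpace Ω]
    [OpensMeasurableSpace Ω] [HasOuterApproxClosed Ω] {l : Filter ι} [l.NeBot]
    {ν : ι → ProbabilityMeasure Ω} {μ : ProbabilityMeasure Ω} (hμ : Tendsto ν l (𝓝 μ)) {s : Set Ω}
    (hs : IsClosed s) (hν : ∀ i, (ν i : Measure Ω) s = 1) : (μ : Measure Ω) s = 1 := by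
  refine le_antisymm prob_le_one ?_
  simpa only [hν, limsup_const] using ProbabilityMeasure.limsup_measure_closed_le_of_tendsto hμ hs

variable {A : Type} [TopologicalSpace A] [DiscreteTopology A] [MeasurableSpace A] [BorelSpace A]

variable {ι : Type*} {l : Filter ι} {ν : ι → ProbabilityMeasure (ℕ → A)}
  {μ : ProbabilityMeasure (ℕ → A)}

lemma tendsto_measureReal_cyl [Finite A] (hμ : Tendsto ν l (𝓝 μ)) (I : List A) :
    Tendsto (fun i => (ν i : Measure (ℕ → A)).real (cyl I)) l
      (𝓝 ((μ : Measure (ℕ → A)).real (cyl I))) := by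
  have := ProbabilityMeasure.tendsto_measure_of_isClopen_of_tendsto hμ (isClopen_cyl I)
  exact (NNReal.continuous_coe.tendsto _).comp this

lemma tendsto_freeEnergy [Fintype A] (ψ : List A → ℝ) (m : ℕ) (hμ : Tendsto ν l (𝓝 μ)) :
    Tendsto (fun i => freeEnergy ψ (ν i) m) l (𝓝 (freeEnergy ψ μ m)) := by
  simp only [freeEnergy_eq_sum]
  exact tendsto_finsetSum _ fun w _ =>
    ((Real.continuous_negMulLog.tendsto _).comp (tendsto_measureReal_cyl hμ _)).add
      ((tendsto_measureReal_cyl hμ _).mul_const _)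

variable [l.NeBot] {C : ℝ} {ψ : List A → ℝ} {N : ι → ℕ} {ρ : ι → Measure (ℕ → A)}
  [∀ i, IsProbabilityMeasure (ρ i)]

lemma SubmultWith.ae_pos_of_tendsto_orbitAverage [Finite A] (hψ : SubmultWith C ψ)
    (hN : Tendsto N l atTop)
    (hν : ∀ i, (ν i : Measure (ℕ → A)) = orbitAverage shiftMap (ρ i) (N i))
    (hμ : Tendsto ν l (𝓝 μ)) (hpos : ∀ i, ∀ᵐ x ∂ρ i, 0 < ψ (wordOf x (N i))) (m : ℕ) :
    ∀ᵐ x ∂(μ : Measure (ℕ → A)), 0 < ψ (wordOf x m) := by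
  refine ae_comp_wordOf (P := fun I => 0 < ψ I) fun w hw => (hψ.nonneg _).lt_of_ne' fun h0 => hw ?_
  have hbound : ∀ i, (ν i : Measure (ℕ → A)).real (cyl (List.ofFn w)) ≤ m / N i := fun i => by
    rw [hν]
    refine measureReal_orbitAverage_le measurable_shiftMap (ρ i) fun j hj => ?_
    by_contra hne
    exact (of_ae_comp_wordOf (P := fun I => 0 < ψ I) (hψ.ae_map_iterate_pos hj (hpos i)) hne).ne' h0
  have hlim := le_of_tendsto_of_tendsto' (tendsto_measureReal_cyl hμ (List.ofFn w))
    ((tendsto_const_nhds (x := (m : ℝ))).div_atTop (tendsto_natCast_atTop_atTop.comp hN)) hbound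
  exact (measureReal_eq_zero_iff).1 (le_antisymm hlim measureReal_nonneg)

theorem SubmultWith.mul_le_freeEnergy_of_tendsto_orbitAverage [Fintype A] (hψ : SubmultWith C ψ)
    (hN : Tendsto N l atTop)
    (hν : ∀ i, (ν i : Measure (ℕ → A)) = orbitAverage shiftMap (ρ i) (N i))
    (hμ : Tendsto ν l (𝓝 μ)) (hpos : ∀ i, ∀ᵐ x ∂ρ i, 0 < ψ (wordOf x (N i))) {b : ℝ}
    (hb : ∀ i, b * N i ≤ freeEnergy ψ (ρ i) (N i)) {m : ℕ} (hm : 0 < m) :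
    m * b ≤ freeEnergy ψ μ m + Real.log C := by
  obtain ⟨K, hK⟩ := hψ.exists_freeEnergy_le_orbitAverage hm
  have hlim : Tendsto (fun i => freeEnergy ψ (ν i) m + Real.log C + K / N i) l
      (𝓝 (freeEnergy ψ μ m + Real.log C + 0)) :=
    ((tendsto_freeEnergy ψ m hμ).add_const _).add
      (tendsto_const_nhds.div_atTop (tendsto_natCast_atTop_atTop.comp hN))
  rw [add_zero] at hlim
  refine ge_of_tendsto hlim ((hN.eventually_ge_atTop m).mono fun i hi => ?_)
  have hNi : (0 : ℝ) < N i := by exact_mod_cast hm.trans_le hi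
  have h := hK (N i) hi (ρ i) inferInstance (hpos i)
  rw [← hν] at h
  rw [← mul_le_mul_iff_right₀ hNi, mul_add, mul_div_cancel₀ _ hNi.ne']
  have hmb := mul_le_mul_of_nonneg_left (hb i) (m.cast_nonneg (α := ℝ))
  linarith

end WeakLimits

section LimitState

lemma IsSubshift.iterate_mem {A : Type} [TopologicalSpace A] {X : Set (ℕ → A)} (hX : IsSubshift X)
    {x : ℕ → A} (hx : x ∈ X) (n : ℕ) : shiftMap^[n] x ∈ X :=
  (Set.mapsTo_iff_image_subset.2 hX.2.2).iterate n hx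

lemma IsSubshift.isClosed {A : Type} [TopologicalSpace A] [T2Space A] {X : Set (ℕ → A)}
    (hX : IsSubshift X) : IsClosed X :=
  hX.2.1.isClosed

variable {A : Type} [TopologicalSpace A] [DiscreteTopology A] [MeasurableSpace A] [BorelSpace A]
  {X : Set (ℕ → A)}

lemma IsSubshift.ae_orbitAverage_mem [Finite A] (hX : IsSubshift X) {ρ : Measure (ℕ → A)}
    (hρ : ∀ᵐ x ∂ρ, x ∈ X) (n : ℕ) : ∀ᵐ x ∂orbitAverage shiftMap ρ n, x ∈ X :=
  ae_orbitAverage fun i _ =>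
    (ae_map_iff (measurable_shiftMap.iterate i).aemeasurable hX.isClosed.measurableSet).2 <|
      hρ.mono fun _ hx => hX.iterate_mem hx i

theorem SubmultWith.exists_mem_MInv [Fintype A] {C : ℝ} {ψ : List A → ℝ} (hψ : SubmultWith C ψ)
    (hX : IsSubshift X) (hlang : ∀ I, 0 < ψ I → Lang X I) {b : ℝ}
    (hb : ∃ᶠ n : ℕ in atTop, 0 < partitionSum ψ n ∧ b * n ≤ Real.log (partitionSum ψ n)) :
    ∃ μ ∈ MInv X, ∀ m, (∀ᵐ x ∂(μ : Measure (ℕ → A)), 0 < ψ (wordOf x m)) ∧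
      (0 < m → m * b ≤ freeEnergy ψ μ m + Real.log C) := by
  obtain ⟨N, hN_mono, hN⟩ :=
    extraction_of_frequently_atTop (hb.and_eventually (eventually_ne_atTop 0))
  choose ρ hρ hρX hρ_pos hρ_eq using fun k =>
    exists_freeEnergy_eq_log_partitionSum hψ.nonneg hlang (hN k).1.1
  let ν : ℕ → ProbabilityMeasure (ℕ → A) := fun k =>
    ⟨orbitAverage shiftMap (ρ k) (N k),
      isProbabilityMeasure_orbitAverage measurable_shiftMap (ρ k) (hN k).2⟩
  have hν : ∀ k, (ν k : Measure (ℕ → A)) = orbitAverage shiftMap (ρ k) (N k) := fun _ => rfl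
  obtain ⟨μ, hμ⟩ : ∃ μ, Tendsto ν (hyperfilter ℕ) (𝓝 μ) :=
    ⟨_, ((hyperfilter ℕ).map ν).le_nhds_lim⟩
  have hN_top : Tendsto N (hyperfilter ℕ) atTop :=
    hN_mono.tendsto_atTop.mono_left Nat.hyperfilter_le_atTop
  have hνX : ∀ k, (ν k : Measure (ℕ → A)) X = 1 := fun k =>
    (mem_ae_iff_prob_eq_one hX.isClosed.measurableSet).1 (hX.ae_orbitAverage_mem (hρX k) (N k))
  refine ⟨μ, ⟨map_eq_of_tendsto_orbitAverage continuous_shiftMap hN_top hν hμ,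
    measure_eq_one_of_tendsto hμ hX.isClosed hνX⟩, fun m => ⟨?_, ?_⟩⟩
  · exact hψ.ae_pos_of_tendsto_orbitAverage hN_top hν hμ hρ_pos m
  · exact hψ.mul_le_freeEnergy_of_tendsto_orbitAverage hN_top hν hμ hρ_pos fun k =>
      (hN k).1.2.trans_eq (hρ_eq k).symm

end LimitState

section ExtendedLog

variable {Ω : Type*} [MeasurableSpace Ω] {μ : Measure Ω} {g h : Ω → ℝ}

lemma intlog_congr_ae (hgh : g =ᵐ[μ] h) : intlog μ g = intlog μ h := by
  unfold intlog
  congr 2 <;> exact lintegral_congr_ae (hgh.mono fun x hx => by simp only [hx])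

lemma intlog_eq_coe_integral (hpos : ∀ᵐ x ∂μ, 0 < g x)
    (hint : Integrable (fun x => Real.log (g x)) μ) :
    intlog μ g = ((∫ x, Real.log (g x) ∂μ : ℝ) : EReal) := by
  have hneg : ∫⁻ x, (if g x ≤ 0 then ⊤ else ENNReal.ofReal (-Real.log (g x))) ∂μ =
      ∫⁻ x, ENNReal.ofReal (-Real.log (g x)) ∂μ :=
    lintegral_congr_ae (hpos.mono fun x hx => if_neg hx.not_ge)
  rw [intlog, hneg, integral_eq_lintegral_pos_part_sub_lintegral_neg_part hint, EReal.coe_sub,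
    EReal.coe_ennreal_toReal hint.lintegral_lt_top.ne,
    EReal.coe_ennreal_toReal (Integrable.lintegral_lt_top hint.fun_neg).ne]

lemma intlog_eq_bot (hg : Measurable g) (h : ¬ ∀ᵐ x ∂μ, 0 < g x) : intlog μ g = ⊥ := by
  have hneg : ∫⁻ x, (if g x ≤ 0 then ⊤ else ENNReal.ofReal (-Real.log (g x))) ∂μ = ⊤ := by
    refine lintegral_eq_top_of_measure_eq_top_ne_zero
      (Measurable.ite (measurableSet_le hg measurable_const) measurable_const
        (Real.measurable_log.comp hg).neg.ennreal_ofReal).aemeasurable fun h0 => h ?_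
    filter_upwards [measure_eq_zero_iff_ae_notMem.1 h0] with x hx
    exact not_le.1 fun hgx => hx (if_pos hgx)
  rw [intlog, hneg, EReal.coe_ennreal_top, EReal.sub_top]

lemma pos_and_mul_le_log_of_lt_inv_mul_elog {t b : ℝ} {n : ℕ} (hn : 0 < n)
    (h : (b : EReal) < (((n : ℝ)⁻¹ : ℝ) : EReal) * elog t) : 0 < t ∧ b * n ≤ Real.log t := by
  have hn' : (0 : ℝ) < n := Nat.cast_pos.2 hn
  rcases le_or_gt t 0 with ht | ht
  · rw [elog, if_pos ht, EReal.coe_mul_bot_of_pos (inv_pos.2 hn')] at h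
    exact absurd h not_lt_bot
  · rw [elog, if_neg ht.not_ge, ← EReal.coe_mul, EReal.coe_lt_coe_iff, lt_inv_mul_iff₀' hn'] at h
    exact ⟨ht, h.le⟩

end ExtendedLog

section VariationalPrinciple

variable {A : Type}

/-- The extension by zero of a word function from the language of `X` to all words. It makes the
sum over `L_n(X)` a `partitionSum` and sub-multiplicativity unconditional. -/
noncomputable def extendZero (X : Set (ℕ → A)) (φ : List A → ℝ) (I : List A) : ℝ :=
  if Lang X I then φ I else 0

variable {X : Set (ℕ → A)} {φ : List A → ℝ}

lemma lang_of_extendZero_pos {I : List A} (h : 0 < extendZero X φ I) : Lang X I := by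
  by_contra hI
  exact h.ne' (if_neg hI)

lemma IsSubshift.lang_of_append [TopologicalSpace A] (hX : IsSubshift X) {I J : List A}
    (h : Lang X (I ++ J)) : Lang X I ∧ Lang X J := by
  obtain ⟨x, hx, hxX⟩ := h
  rw [mem_cyl_iff, List.length_append, wordOf_add] at hx
  obtain ⟨hI, hJ⟩ := List.append_inj hx (length_wordOf x _)
  exact ⟨hI ▸ lang_wordOf hxX _, hJ ▸ lang_wordOf (hX.iterate_mem hxX _) _⟩

lemma Submult.exists_submultWith_extendZero [TopologicalSpace A] (hφ : Submult X φ)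
    (hX : IsSubshift X) : ∃ C, SubmultWith C (extendZero X φ) := by
  obtain ⟨hφ_nonneg, -, c, hc, hφ_append⟩ := hφ
  have hnonneg : ∀ I, 0 ≤ extendZero X φ I := fun I => by
    unfold extendZero
    split_ifs with hI
    exacts [hφ_nonneg I hI, le_rfl]
  refine ⟨c⁻¹, inv_pos.2 hc, hnonneg, fun I J => ?_⟩
  by_cases hIJ : Lang X (I ++ J)
  · obtain ⟨hI, hJ⟩ := hX.lang_of_append hIJ
    simpa only [extendZero, if_pos hIJ, if_pos hI, if_pos hJ] using hφ_append I J hIJ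
  · rw [extendZero, if_neg hIJ]
    exact mul_nonneg (mul_nonneg (inv_pos.2 hc).le (hnonneg I)) (hnonneg J)

variable [Fintype A] [MeasurableSpace A]

section LevelwiseFreeEnergy

lemma wordEntropy_nonneg (μ : Measure (ℕ → A)) [IsProbabilityMeasure μ] (n : ℕ) :
    0 ≤ wordEntropy μ n :=
  Finset.sum_nonneg fun _ _ => Real.negMulLog_nonneg measureReal_nonneg measureReal_le_one

lemma Hblock_eq_wordEntropy {μ : Measure (ℕ → A)} (hX : ∀ᵐ x ∂μ, x ∈ X) :
    Hblock X μ = wordEntropy μ := by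
  have hmw : ∀ I, mw X μ I = μ.real (cyl I) := fun I =>
    congrArg ENNReal.toReal <| measure_congr <|
      inter_ae_eq_left_of_ae_eq_univ (eventuallyEq_univ.2 hX)
  ext n
  simp only [Hblock, wordEntropy, Real.negMulLog, hmw, neg_mul, Finset.sum_neg_distrib]

variable [MeasurableSingletonClass A]

lemma subadditive_wordEntropy {μ : Measure (ℕ → A)} [IsProbabilityMeasure μ]
    (hμ : μ.map shiftMap = μ) : Subadditive (wordEntropy μ) := fun m n => by
  have hm : μ.map shiftMap^[m] = μ :=
    ((MeasurePreserving.mk measurable_shiftMap hμ).iterate m).map_eq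
  simpa only [hm] using wordEntropy_add_le μ m n

lemma tendsto_wordEntropy_div_ent {μ : Measure (ℕ → A)} [IsProbabilityMeasure μ]
    (hμ : μ.map shiftMap = μ) (hX : ∀ᵐ x ∂μ, x ∈ X) :
    Tendsto (fun n : ℕ => wordEntropy μ n / n) atTop (𝓝 (ent X μ)) := by
  have hlim := (subadditive_wordEntropy hμ).tendsto_lim ⟨0, by
    rintro _ ⟨n, rfl⟩
    exact div_nonneg (wordEntropy_nonneg μ n) n.cast_nonneg⟩
  rw [ent, Hblock_eq_wordEntropy hX, hlim.liminf_eq]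
  exact hlim

lemma inv_mul_intlog_genPot_add {ψ : List A → ℝ} {μ : Measure (ℕ → A)} [IsProbabilityMeasure μ]
    {n : ℕ} (hpos : ∀ᵐ x ∂μ, 0 < ψ (wordOf x n)) :
    (((n : ℝ)⁻¹ : ℝ) : EReal) * intlog μ (genPot ψ n) + ((wordEntropy μ n / n : ℝ) : EReal) =
      ((freeEnergy ψ μ n / n : ℝ) : EReal) := by
  rw [intlog_eq_coe_integral (g := genPot ψ n) hpos
    (integrable_comp_wordOf μ (fun I => Real.log (ψ I)) n)]
  norm_cast
  simp only [freeEnergy, genPot]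
  ring

lemma inv_mul_intlog_add_le_elog {ψ : List A → ℝ} (hψ : ∀ I, 0 ≤ ψ I) (μ : Measure (ℕ → A))
    [IsProbabilityMeasure μ] {n : ℕ} (hn : 0 < n) :
    (((n : ℝ)⁻¹ : ℝ) : EReal) * intlog μ (genPot ψ n) + ((wordEntropy μ n / n : ℝ) : EReal) ≤
      (((n : ℝ)⁻¹ : ℝ) : EReal) * elog (partitionSum ψ n) := by
  by_cases hpos : ∀ᵐ x ∂μ, 0 < ψ (wordOf x n)
  · rw [inv_mul_intlog_genPot_add hpos, elog, if_neg (partitionSum_pos_of_ae hψ hpos).not_ge,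
      ← EReal.coe_mul, EReal.coe_le_coe_iff, div_eq_inv_mul]
    gcongr
    exact freeEnergy_le_log_partitionSum hψ μ hpos
  · rw [intlog_eq_bot (g := genPot ψ n) (measurable_comp_wordOf ψ n) hpos,
      EReal.coe_mul_bot_of_pos (inv_pos.2 (Nat.cast_pos.2 hn)), EReal.bot_add]
    exact bot_le

end LevelwiseFreeEnergy

variable [TopologicalSpace A] [DiscreteTopology A] [BorelSpace A]

lemma eqVal_genPot_eq_liminf (hX : IsSubshift X) {μ : ProbabilityMeasure (ℕ → A)}
    (hμ : μ ∈ MInv X) :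
    eqVal X (genPot φ) μ = liminf (fun n : ℕ => (((n : ℝ)⁻¹ : ℝ) : EReal) *
      intlog μ (genPot (extendZero X φ) n) +
        ((wordEntropy (μ : Measure (ℕ → A)) n / n : ℝ) : EReal)) atTop := by
  have hμX : ∀ᵐ x ∂(μ : Measure (ℕ → A)), x ∈ X :=
    (mem_ae_iff_prob_eq_one hX.isClosed.measurableSet).2 hμ.2
  have hgenPot : ∀ n, intlog (μ : Measure (ℕ → A)) (genPot φ n) =
      intlog μ (genPot (extendZero X φ) n) := fun n =>
    intlog_congr_ae (hμX.mono fun x hx => (if_pos (lang_wordOf hx n)).symm)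
  have hent := EReal.tendsto_coe.2 (tendsto_wordEntropy_div_ent hμ.1 hμX)
  simp only [eqVal, PhiStar, hgenPot]
  refine le_antisymm ?_ ?_
  · rw [← hent.liminf_eq]
    exact EReal.le_liminf_add
  · rw [← hent.limsup_eq, add_comm]
    simp only [add_comm ((_ : EReal) * _)]
    refine EReal.liminf_add_le ?_ ?_ <;> rw [hent.limsup_eq]
    exacts [.inl (EReal.coe_ne_bot _), .inl (EReal.coe_ne_top _)]

theorem eqVal_le_liminf_elog_partitionSum (hX : IsSubshift X) (hφ : ∀ I, 0 ≤ extendZero X φ I)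
    {μ : ProbabilityMeasure (ℕ → A)} (hμ : μ ∈ MInv X) :
    eqVal X (genPot φ) μ ≤ liminf (fun n : ℕ =>
      (((n : ℝ)⁻¹ : ℝ) : EReal) * elog (partitionSum (extendZero X φ) n)) atTop := by
  rw [eqVal_genPot_eq_liminf hX hμ]
  exact liminf_le_liminf ((eventually_gt_atTop 0).mono fun n hn =>
    inv_mul_intlog_add_le_elog hφ μ hn)

theorem exists_le_eqVal_of_lt_limsup (hX : IsSubshift X) {C : ℝ}
    (hφ : SubmultWith C (extendZero X φ)) {b : ℝ}
    (hb : (b : EReal) < limsup (fun n : ℕ =>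
      (((n : ℝ)⁻¹ : ℝ) : EReal) * elog (partitionSum (extendZero X φ) n)) atTop) :
    ∃ μ ∈ MInv X, (b : EReal) ≤ eqVal X (genPot φ) μ := by
  obtain ⟨μ, hμ, hμ_state⟩ := hφ.exists_mem_MInv hX (fun _ => lang_of_extendZero_pos)
    (((frequently_lt_of_lt_limsup (by isBoundedDefault) hb).and_eventually
      (eventually_gt_atTop 0)).mono fun n hn => pos_and_mul_le_log_of_lt_inv_mul_elog hn.2 hn.1)
  refine ⟨μ, hμ, ?_⟩
  have hlim : Tendsto (fun n : ℕ => ((b - Real.log C / n : ℝ) : EReal)) atTop (𝓝 (b : EReal)) := by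
    refine EReal.tendsto_coe.2 ?_
    simpa only [sub_zero] using
      (tendsto_const_div_atTop_nhds_zero_nat (Real.log C)).const_sub b
  rw [eqVal_genPot_eq_liminf hX hμ, ← hlim.liminf_eq]
  refine liminf_le_liminf ((eventually_gt_atTop 0).mono fun n hn => ?_)
  have hn' : (0 : ℝ) < n := Nat.cast_pos.2 hn
  rw [inv_mul_intlog_genPot_add (hμ_state n).1, EReal.coe_le_coe_iff, le_div_iff₀ hn', sub_mul,
    div_mul_cancel₀ _ hn'.ne', sub_le_iff_le_add, mul_comm]
  exact (hμ_state n).2 hn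

end VariationalPrinciple

/-- Proposition 3.2(i) / `pro-2.1`(i): variational principle
`sup{Φ_*(μ) + h_μ} = lim (1/n) log Σ_{I ∈ L_n(X)} φ(I)` for a potential generated by a
sub-multiplicative word function. -/
theorem weighted_eq_states_stmt_3 {A : Type} [Fintype A] [TopologicalSpace A]
    [DiscreteTopology A] [MeasurableSpace A] [BorelSpace A]
    (X : Set (ℕ → A)) (hX : IsSubshift X)
    (φ : List A → ℝ) (hφ : Submult X φ) :
    Tendsto
      (fun n : ℕ => (((n : ℝ)⁻¹ : ℝ) : EReal) *
        elog (∑ w : Fin n → A, if Lang X (List.ofFn w) then φ (List.ofFn w) else 0))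
      atTop (nhds (⨆ μ ∈ MInv X, eqVal X (genPot φ) μ)) := by
  obtain ⟨C, hψ⟩ := hφ.exists_submultWith_extendZero hX
  change Tendsto (fun n : ℕ => (((n : ℝ)⁻¹ : ℝ) : EReal) * elog (partitionSum (extendZero X φ) n))
    atTop (𝓝 (⨆ μ ∈ MInv X, eqVal X (genPot φ) μ))
  refine tendsto_of_le_liminf_of_limsup_le ?_ ?_
  · exact iSup₂_le fun μ hμ => eqVal_le_liminf_elog_partitionSum hX hψ.nonneg hμ
  · refine EReal.ge_of_forall_gt_iff_ge.1 fun b hb => ?_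
    obtain ⟨μ, hμ, hbμ⟩ := exists_le_eqVal_of_lt_limsup hX hψ hb
    exact hbμ.trans (le_iSup₂ (f := fun μ (_ : μ ∈ MInv X) => eqVal X (genPot φ) μ) μ hμ)
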